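/- arXiv:2305.15057 — 6 statements merged into one kernel-verified Lean document; each statement's English description precedes it below -/
import Mathlib

section
/- A binary tree with distinct node labels is uniquely reconstructable from its inorder and preorder traversals: if t₁ and t₂ are binary trees over a label type α such that inorder(t₁) has no duplicate labels, inorder(t₁) = inorder(t₂), and preorder(t₁) = preorder(t₂), then t₁ = t₂. -/
/-- Binary trees over a label type `α`. -/
inductive BTree (α : Type*) where
  | nil : BTree α
  | node : α → BTree α → BTree α → BTree α

namespace BTree

/-- Inorder traversal. -/
def inorder {α : Type*} : BTree α → List α
  | nil => []
  | node a l r => inorder l ++ [a] ++ inorder r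

/-- Preorder traversal. -/
def preorder {α : Type*} : BTree α → List α
  | nil => []
  | node a l r => [a] ++ preorder l ++ preorder r

end BTree

/-!
The preorder traversal begins with the root. Its only occurrence in the inorder traversal separates
the left subtree from the right one. Both traversals of a tree have the same length, so the size of
the left subtree is now known, and it tells where to cut the rest of the preorder traversal. Hence
corresponding subtrees have the same traversals, and induction applies.
-/

namespace BTree

variable {α : Type*} {a b : α} {l r l' r' : BTree α}

theorem inorder_node (a : α) (l r : BTree α) :
    (node a l r).inorder = l.inorder ++ a :: r.inorder :=
  (List.append_cons ..).symm

theorem preorder_node (a : α) (l r : BTree α) :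
    (node a l r).preorder = a :: (l.preorder ++ r.preorder) :=
  rfl

theorem preorder_eq_nil_iff {t : BTree α} : t.preorder = [] ↔ t = nil := by
  cases t <;> simp [preorder]

theorem preorder_perm_inorder (t : BTree α) : t.preorder.Perm t.inorder := by
  induction t with
  | nil => exact .refl _
  | node a l r ihl ihr =>
    rw [preorder_node, inorder_node]
    exact ((ihl.append ihr).cons a).trans List.perm_middle.symm

theorem length_preorder (t : BTree α) : t.preorder.length = t.inorder.length :=
  t.preorder_perm_inorder.length_eq

theorem nodup_inorder_node_iff :
    (node a l r).inorder.Nodup ↔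
      (a ∉ l.inorder ∧ a ∉ r.inorder) ∧
        l.inorder.Nodup ∧ r.inorder.Nodup ∧ l.inorder.Disjoint r.inorder := by
  rw [inorder_node, List.nodup_middle, List.nodup_cons, List.mem_append, not_or,
    List.nodup_append']

theorem inorder_node_inj_of_notMem (hbl : b ∉ l.inorder) (hbr : b ∉ r.inorder) :
    (node a l r).inorder = (node b l' r').inorder ↔
      l.inorder = l'.inorder ∧ a = b ∧ r.inorder = r'.inorder := by
  rw [inorder_node, inorder_node, List.append_cons_inj_of_notMem hbl hbr]

theorem preorder_node_inj_of_length_eq (h : l.preorder.length = l'.preorder.length) :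
    (node a l r).preorder = (node b l' r').preorder ↔
      a = b ∧ l.preorder = l'.preorder ∧ r.preorder = r'.preorder := by
  rw [preorder_node, preorder_node, List.cons_eq_cons,
    List.append_eq_append_iff_of_size_eq_left h]

end BTree

/-- A binary tree with distinct labels is uniquely determined by its inorder and
preorder traversals. -/
theorem btree_eq_of_inorder_preorder {α : Type*} (t₁ t₂ : BTree α)
    (hnd : t₁.inorder.Nodup)
    (hin : t₁.inorder = t₂.inorder)
    (hpre : t₁.preorder = t₂.preorder) :
    t₁ = t₂ := by
  induction t₁ generalizing t₂ with
  | nil => exact (BTree.preorder_eq_nil_iff.1 hpre.symm).symm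
  | node a l r ihl ihr =>
    cases t₂ with
    | nil => exact BTree.preorder_eq_nil_iff.1 hpre
    | node b l' r' =>
      obtain rfl : a = b := List.head_eq_of_cons_eq hpre
      obtain ⟨⟨hal, har⟩, hndl, hndr, -⟩ := BTree.nodup_inorder_node_iff.1 hnd
      obtain ⟨hinl, -, hinr⟩ := (BTree.inorder_node_inj_of_notMem hal har).1 hin
      have hlen : l.preorder.length = l'.preorder.length := by
        rw [l.length_preorder, hinl, l'.length_preorder]
      obtain ⟨-, hprel, hprer⟩ := (BTree.preorder_node_inj_of_length_eq hlen).1 hpre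
      rw [ihl l' hndl hinl hprel, ihr r' hndr hinr hprer]
end

section
/- Right descendants are characterized by the intersection of the reversed inorder and postorder: let t be a binary tree over a label type α whose inorder traversal has no duplicate labels, and let x, y be labels occurring in t. Then x is a right descendant of y in t (i.e., some subtree of t has root label y and x occurs among the labels of its right child) if and only if y appears strictly before x in inorder(t) and x appears strictly before y in postorder(t). -/
namespace BTree

/-- Postorder traversal. -/
def postorder {α : Type*} : BTree α → List α
  | nil => []
  | node a l r => postorder l ++ postorder r ++ [a]

/-- The subtree relation: `Subtree s t` means `s` is a subtree of `t`. -/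
inductive Subtree {α : Type*} : BTree α → BTree α → Prop
  | refl (t : BTree α) : Subtree t t
  | left {s l r : BTree α} (a : α) : Subtree s l → Subtree s (node a l r)
  | right {s l r : BTree α} (a : α) : Subtree s r → Subtree s (node a l r)

/-- `x` is a right descendant of `y` in `t`: some subtree of `t` has root label `y`
and `x` occurs among the labels of its right child. -/
def RightDescendant {α : Type*} (t : BTree α) (x y : α) : Prop :=
  ∃ l r : BTree α, Subtree (node y l r) t ∧ x ∈ inorder r

/-- `x` appears strictly before `y` in the list `u`. -/
def Before {α : Type*} (u : List α) (x y : α) : Prop :=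
  [x, y].Sublist u

end BTree

/-!
Fix the subtree `s` rooted at `y`. It occupies a contiguous block of both traversals. The labels
following this block in the inorder traversal are the ancestors having `s` in their left child,
together with the right children of these ancestors, and postorder visits all of them after `s`.
A label after `y` in inorder is therefore either in the right child of `s` or after `y` in
postorder; as labels are distinct, coming before `y` in postorder excludes the latter.
-/

namespace BTree

variable {α : Type*}

theorem before_append_cons_left_iff {u v : List α} {x y : α} (hy : y ∉ u) :
    Before (u ++ y :: v) y x ↔ x ∈ v := by
  induction u with
  | nil => simp [Before]
  | cons a u ih =>
    obtain ⟨hya, hyu⟩ := List.ne_and_not_mem_of_not_mem_cons hy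
    simpa [Before, List.sublist_cons_iff, hya] using ih hyu

theorem before_reverse_iff {u : List α} {x y : α} : Before u.reverse x y ↔ Before u y x :=
  List.reverse_sublist (l₁ := [y, x])

theorem before_append_cons_right_iff {u v : List α} {x y : α} (hy : y ∉ v) :
    Before (u ++ y :: v) x y ↔ x ∈ u := by
  rw [← before_reverse_iff]
  simpa using before_append_cons_left_iff (v := u.reverse) (x := x) (mt List.mem_reverse.1 hy)

theorem postorder_perm_inorder (t : BTree α) : t.postorder.Perm t.inorder := by
  induction t with
  | nil => exact .refl _
  | node a l r ihl ihr =>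
    have hright : (r.postorder ++ [a]).Perm ([a] ++ r.inorder) :=
      List.perm_append_comm.trans (ihr.append_left [a])
    simpa only [inorder, postorder, List.append_assoc] using ihl.append hright

theorem exists_subtree_node_of_mem_inorder {t : BTree α} {y : α} (hy : y ∈ t.inorder) :
    ∃ l r : BTree α, Subtree (node y l r) t := by
  induction t with
  | nil => simp [inorder] at hy
  | node a l r ihl ihr =>
    simp only [inorder, List.mem_append, List.mem_singleton] at hy
    rcases hy with (hyl | rfl) | hyr
    · obtain ⟨l', r', h⟩ := ihl hyl
      exact ⟨l', r', h.left a⟩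
    · exact ⟨l, r, .refl _⟩
    · obtain ⟨l', r', h⟩ := ihr hyr
      exact ⟨l', r', h.right a⟩

theorem Subtree.exists_traversals_eq_append {s t : BTree α} (h : Subtree s t) :
    ∃ u v p q : List α, t.inorder = u ++ s.inorder ++ v ∧
      t.postorder = p ++ s.postorder ++ q ∧ v ⊆ q := by
  induction h with
  | refl => exact ⟨[], [], [], [], by simp, by simp, List.Subset.refl _⟩
  | @left l r a _ ih =>
    obtain ⟨u, v, p, q, hin, hpost, hvq⟩ := ih
    refine ⟨u, v ++ [a] ++ r.inorder, p, q ++ r.postorder ++ [a],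
      by simp [inorder, hin], by simp [postorder, hpost], fun z hz ↦ ?_⟩
    simp only [List.mem_append, r.postorder_perm_inorder.mem_iff] at hz ⊢
    rcases hz with (hzv | hza) | hzr
    · exact .inl (.inl (hvq hzv))
    · exact .inr hza
    · exact .inl (.inr hzr)
  | @right l r a _ ih =>
    obtain ⟨u, v, p, q, hin, hpost, hvq⟩ := ih
    exact ⟨l.inorder ++ [a] ++ u, v, l.postorder ++ p, q ++ [a],
      by simp [inorder, hin], by simp [postorder, hpost], List.subset_append_of_subset_left _ hvq⟩

theorem Subtree.mem_inorder_right_iff {t l r : BTree α} {x y : α} (hnd : t.inorder.Nodup)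
    (h : Subtree (node y l r) t) :
    x ∈ r.inorder ↔ Before t.inorder y x ∧ Before t.postorder x y := by
  obtain ⟨u, v, p, q, hin, hpost, hvq⟩ := h.exists_traversals_eq_append
  have hin_split : t.inorder = (u ++ l.inorder) ++ y :: (r.inorder ++ v) := by
    simp [hin, inorder]
  have hpost_split : t.postorder = (p ++ l.postorder ++ r.postorder) ++ y :: q := by
    simp [hpost, postorder]
  have hnd_post : t.postorder.Nodup := t.postorder_perm_inorder.nodup_iff.2 hnd
  rw [hin_split] at hnd ⊢
  rw [hpost_split] at hnd_post ⊢
  have hy_in : y ∉ u ++ l.inorder := fun hy ↦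
    List.disjoint_of_nodup_append hnd hy List.mem_cons_self
  have hy_post : y ∉ q := (List.nodup_cons.1 hnd_post.of_append_right).1
  rw [before_append_cons_left_iff hy_in, before_append_cons_right_iff hy_post]
  constructor
  · intro hxr
    exact ⟨List.mem_append_left v hxr,
      List.mem_append_right _ (r.postorder_perm_inorder.mem_iff.2 hxr)⟩
  · rintro ⟨hx_after, hx_before⟩
    refine (List.mem_append.1 hx_after).resolve_right fun hxv ↦ ?_
    exact List.disjoint_of_nodup_append hnd_post hx_before (List.mem_cons_of_mem y (hvq hxv))

end BTree

open BTree in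
/-- Right descendants are characterized by the intersection of the reversed inorder and
postorder traversals. -/
theorem rightDescendant_iff {α : Type*} (t : BTree α)
    (hnd : t.inorder.Nodup) (x y : α)
    (hx : x ∈ t.inorder) (hy : y ∈ t.inorder) :
    RightDescendant t x y ↔ Before t.inorder y x ∧ Before t.postorder x y := by
  constructor
  · rintro ⟨l, r, hsub, hxr⟩
    exact (hsub.mem_inorder_right_iff hnd).1 hxr
  · intro hbefore
    obtain ⟨l, r, hsub⟩ := exists_subtree_node_of_mem_inorder hy
    exact ⟨l, r, hsub, (hsub.mem_inorder_right_iff hnd).2 hbefore⟩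
end

section
/- (Correctness of Algorithm 1 for min-aggregation) Let V be a set, f₁, f₂ : V → ℝ, and let u₀, u₁, …, u_{N−1} be a list of elements of V sorted strictly increasingly by the key f₁ − f₂, i.e., for all indices m < n < N, f₁(u_m) − f₂(u_m) < f₁(u_n) − f₂(u_n). Then for every index n with 1 ≤ n < N: min_{0 ≤ m < n} max(f₁(u_n) − f₁(u_m), f₂(u_n) − f₂(u_m)) = f₁(u_n) + min_{0 ≤ m < n} (−f₁(u_m)). -/
theorem sub_sup_sub_eq_left_of_sub_le_sub {G : Type*} [AddCommGroup G] [SemilatticeSup G]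
    [AddLeftMono G] {a b c d : G} (h : b - d ≤ a - c) : (a - b) ⊔ (c - d) = a - b := by
  rw [sup_eq_left, sub_le_sub_iff, add_comm c b]
  exact sub_le_sub_iff.mp h

theorem inf'_const_sub_eq_add_inf'_neg {ι G : Type*} [AddGroup G] [SemilatticeInf G]
    [AddLeftMono G] {s : Finset ι} (hs : s.Nonempty) (a : G) (f : ι → G) :
    s.inf' hs (fun i ↦ a - f i) = a + s.inf' hs (fun i ↦ -f i) := by
  simp only [sub_eq_add_neg]
  exact (map_finset_inf' (OrderIso.addLeft a) hs _).symm

theorem algorithm1_min_correct_general {ι G : Type*} [AddCommGroup G] [Lattice G]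
    [AddLeftMono G] (f₁ f₂ : ι → G) {s : Finset ι} (hs : s.Nonempty) {n : ι}
    (hkey : ∀ m ∈ s, f₁ m - f₂ m ≤ f₁ n - f₂ n) :
    s.inf' hs (fun m ↦ (f₁ n - f₁ m) ⊔ (f₂ n - f₂ m)) =
      f₁ n + s.inf' hs (fun m ↦ -f₁ m) :=
  calc
    s.inf' hs (fun m ↦ (f₁ n - f₁ m) ⊔ (f₂ n - f₂ m)) = s.inf' hs (fun m ↦ f₁ n - f₁ m) :=
      Finset.inf'_congr hs rfl fun m hm ↦ sub_sup_sub_eq_left_of_sub_le_sub (hkey m hm)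
    _ = f₁ n + s.inf' hs (fun m ↦ -f₁ m) := inf'_const_sub_eq_add_inf'_neg hs (f₁ n) f₁

/-- Correctness of Algorithm 1 for min-aggregation: if `u 0, …, u (N-1)` are sorted
strictly increasingly by the key `f₁ - f₂`, then for every `n` with `1 ≤ n < N`, the
minimum over `m < n` of the pair-wise function equals `f₁ (u n)` plus the minimum over
`m < n` of `-f₁ (u m)`. -/
theorem algorithm1_min_correct {V : Type*} (f₁ f₂ : V → ℝ) (N : ℕ) (u : ℕ → V)
    (hsorted : ∀ m n, m < n → n < N → f₁ (u m) - f₂ (u m) < f₁ (u n) - f₂ (u n)) :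
    ∀ n (hn : 1 ≤ n) (hN : n < N),
      (Finset.range n).inf' (Finset.nonempty_range_iff.mpr (by omega))
        (fun m => max (f₁ (u n) - f₁ (u m)) (f₂ (u n) - f₂ (u m)))
      = f₁ (u n) +
        (Finset.range n).inf' (Finset.nonempty_range_iff.mpr (by omega))
          (fun m => -f₁ (u m)) := by
  intro n _ hN
  exact algorithm1_min_correct_general (f₁ ∘ u) (f₂ ∘ u) _ fun m hm ↦
    (hsorted m n (Finset.mem_range.mp hm) hN).le
end

section
/- (Correctness of Algorithm 1 for log-sum-exp aggregation) Let V be a set, f₁, f₂ : V → ℝ, and let u₀, u₁, …, u_{N−1} be a list of elements of V sorted strictly increasingly by the key f₁ − f₂, i.e., for all indices m < n < N, f₁(u_m) − f₂(u_m) < f₁(u_n) − f₂(u_n). Then for every index n with 1 ≤ n < N: Σ_{0 ≤ m < n} exp(−max(f₁(u_n) − f₁(u_m), f₂(u_n) − f₂(u_m))) = exp(−f₁(u_n)) · Σ_{0 ≤ m < n} exp(f₁(u_m)). -/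
theorem max_sub_sub_eq_left_iff {G : Type*} [AddCommGroup G] [LinearOrder G] [IsOrderedAddMonoid G]
    {a b c d : G} : max (a - c) (b - d) = a - c ↔ c - d ≤ a - b := by
  rw [max_eq_left_iff, sub_le_sub_iff, sub_le_sub_iff, add_comm b c]

theorem algorithm1_logsumexp_correct_general {V : Type*} (f₁ f₂ : V → ℝ) (s : Finset V) (x : V)
    (hkey : ∀ y ∈ s, f₁ y - f₂ y ≤ f₁ x - f₂ x) :
    ∑ y ∈ s, Real.exp (-(max (f₁ x - f₁ y) (f₂ x - f₂ y)))
      = Real.exp (-f₁ x) * ∑ y ∈ s, Real.exp (f₁ y) := by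
  rw [Finset.mul_sum]
  refine Finset.sum_congr rfl fun y hy => ?_
  calc Real.exp (-(max (f₁ x - f₁ y) (f₂ x - f₂ y)))
      = Real.exp (-(f₁ x - f₁ y)) := by rw [max_sub_sub_eq_left_iff.mpr (hkey y hy)]
    _ = Real.exp (-f₁ x + f₁ y) := by rw [neg_sub, sub_eq_neg_add]
    _ = Real.exp (-f₁ x) * Real.exp (f₁ y) := Real.exp_add _ _

open Real in
/-- Correctness of Algorithm 1 for log-sum-exp aggregation: if `u 0, …, u (N-1)` are
sorted strictly increasingly by the key `f₁ - f₂`, then for every `n` with `1 ≤ n < N`,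
the sum over `m < n` of `exp (-P (u n) (u m))` factors as
`exp (-f₁ (u n)) * Σ_{m < n} exp (f₁ (u m))`. -/
theorem algorithm1_logsumexp_correct {V : Type*} (f₁ f₂ : V → ℝ) (N : ℕ) (u : ℕ → V)
    (hsorted : ∀ m n, m < n → n < N → f₁ (u m) - f₂ (u m) < f₁ (u n) - f₂ (u n)) :
    ∀ n (hn : 1 ≤ n) (hN : n < N),
      ∑ m ∈ Finset.range n,
          exp (-(max (f₁ (u n) - f₁ (u m)) (f₂ (u n) - f₂ (u m))))
      = exp (-f₁ (u n)) * ∑ m ∈ Finset.range n, exp (f₁ (u m)) :=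
  fun n _ hN => algorithm1_logsumexp_correct_general (f₁ ∘ u) (f₂ ∘ u) (Finset.range n) n
    fun m hm => (hsorted m n (Finset.mem_range.mp hm) hN).le
end

section
/- (Trees are 2-dimensional) Let V be a finite set and r ⊆ V × V a rooted directed tree relation: there is an element ρ ∈ V such that ρ has no outgoing r-edge, every element x ≠ ρ has exactly one outgoing r-edge (its parent edge, pointing toward its head), and every x ≠ ρ reaches ρ under the transitive closure of r. Then the strict ancestor order ≺ (the transitive closure of r), which is a strict partial order, admits a realizer of size 2: there exist strict linear orders <₁ and <₂ on V such that for all x, y ∈ V, x ≺ y iff x <₁ y and x <₂ y. -/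
/-- `lt` is a strict linear order: irreflexive, asymmetric, transitive, and total on
distinct elements. -/
def IsStrictLinearOrderRel {V : Type*} (lt : V → V → Prop) : Prop :=
  (∀ x, ¬ lt x x) ∧ (∀ x y, lt x y → ¬ lt y x) ∧
  (∀ x y z, lt x y → lt y z → lt x z) ∧ (∀ x y, x ≠ y → lt x y ∨ lt y x)

/-!
Send each vertex to the list of vertices on the path from its root down to it. This map is
injective and turns the ancestor relation into the prefix relation on lists. For any strict
linear order `s` on the vertices, a list is a proper prefix of another iff it precedes it
lexicographically both for `s` and for the reverse of `s`: at the first position where two lists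
differ, the two lexicographic orders disagree.
-/

open Relation Function

theorem isStrictLinearOrderRel_of_isStrictTotalOrder {V : Type*} (lt : V → V → Prop)
    [IsStrictTotalOrder V lt] : IsStrictLinearOrderRel lt :=
  ⟨irrefl, fun _ _ ↦ asymm, fun _ _ _ ↦ _root_.trans, fun x y hxy ↦
    (trichotomous_of lt x y).imp_right fun h ↦ h.resolve_left hxy⟩

section Lex

variable {α : Type*}

instance isStrictTotalOrder_lex (s : α → α → Prop) [IsStrictTotalOrder α s] :
    IsStrictTotalOrder (List α) (List.Lex s) :=
  { isStrictWeakOrder_of_isOrderConnected with }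

theorem lex_append_of_ne_nil (s : α → α → Prop) (l : List α) {t : List α} (ht : t ≠ []) :
    List.Lex s l (l ++ t) := by
  obtain ⟨a, t, rfl⟩ := List.exists_cons_of_ne_nil ht
  simpa only [List.append_nil] using List.Lex.append_left s (.nil (a := a) (l := t)) l

theorem isPrefix_of_lex_of_lex_swap {s : α → α → Prop} [Std.Asymm s] {l₁ l₂ : List α}
    (h : List.Lex s l₁ l₂) (h' : List.Lex (swap s) l₁ l₂) : l₁ <+: l₂ := by
  induction h with
  | nil => exact List.nil_prefix
  | cons _ ih =>
    cases h' with
    | cons h' => exact (List.prefix_cons_inj _).2 (ih h')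
    | rel hs => exact absurd hs (irrefl _)
  | rel hs =>
    cases h' with
    | cons _ => exact absurd hs (irrefl _)
    | rel hs' => exact absurd hs' (asymm hs)

theorem isPrefix_and_ne_iff_lex_and_lex_swap (s : α → α → Prop) [Std.Asymm s]
    {l₁ l₂ : List α} :
    l₁ <+: l₂ ∧ l₁ ≠ l₂ ↔ List.Lex s l₁ l₂ ∧ List.Lex (swap s) l₁ l₂ := by
  constructor
  · rintro ⟨⟨t, rfl⟩, hne⟩
    have ht : t ≠ [] := by rintro rfl; exact hne (List.append_nil l₁).symm
    exact ⟨lex_append_of_ne_nil s l₁ ht, lex_append_of_ne_nil (swap s) l₁ ht⟩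
  · rintro ⟨h, h'⟩
    exact ⟨isPrefix_of_lex_of_lex_swap h h', ne_of_irrefl h⟩

theorem isStrictLinearOrderRel_swap_lex_on {V : Type*} (s : α → α → Prop)
    [IsStrictTotalOrder α s] {p : V → List α} (hp : Injective p) :
    IsStrictLinearOrderRel fun x y ↦ List.Lex s (p y) (p x) :=
  have := (RelEmbedding.preimage ⟨p, hp⟩ (swap (List.Lex s))).isStrictTotalOrder
  isStrictLinearOrderRel_of_isStrictTotalOrder (p ⁻¹'o swap (List.Lex s))

theorem exists_realizer_of_iff_isPrefix_and_ne {V : Type*} {lt : V → V → Prop}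
    {p : V → List α} (hp : Injective p) (hlt : ∀ x y, lt x y ↔ p y <+: p x ∧ p y ≠ p x) :
    ∃ lt₁ lt₂ : V → V → Prop,
      IsStrictLinearOrderRel lt₁ ∧ IsStrictLinearOrderRel lt₂ ∧
      ∀ x y, lt x y ↔ lt₁ x y ∧ lt₂ x y :=
  let s : α → α → Prop := WellOrderingRel
  ⟨_, _, isStrictLinearOrderRel_swap_lex_on s hp, isStrictLinearOrderRel_swap_lex_on (swap s) hp,
    fun x y ↦ (hlt x y).trans (isPrefix_and_ne_iff_lex_and_lex_swap s)⟩

end Lex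

section RootPath

variable {V : Type*} {r : V → V → Prop}

open Classical in
/-- For a parent relation `r` (`r x y` says that `y` is the parent of `x`) without infinite
ascending paths, the list of vertices on the path from the root above `x` down to `x`, both ends
included. If `x` has several parents, an arbitrary one is followed. -/
noncomputable def rootPath (hwf : WellFounded (swap r)) : V → List V :=
  hwf.fix fun x path ↦ (if h : ∃ y, r x y then path h.choose h.choose_spec else []) ++ [x]

theorem rootPath_of_forall_not (hwf : WellFounded (swap r)) {x : V} (hx : ∀ y, ¬ r x y) :
    rootPath hwf x = [x] := by
  rw [rootPath, hwf.fix_eq, dif_neg (not_exists.2 hx), List.nil_append]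

theorem rootPath_of_rel (hwf : WellFounded (swap r)) (hr : Relator.RightUnique r) {x y : V}
    (hxy : r x y) : rootPath hwf x = rootPath hwf y ++ [x] := by
  have hx : ∃ y, r x y := ⟨y, hxy⟩
  have hparent : hx.choose = y := hr hx.choose_spec hxy
  rw [rootPath, hwf.fix_eq, dif_pos hx]
  exact congrArg (rootPath hwf · ++ [x]) hparent

theorem getLast?_rootPath (hwf : WellFounded (swap r)) (x : V) :
    (rootPath hwf x).getLast? = some x := by
  rw [rootPath, hwf.fix_eq, List.getLast?_concat]

theorem rootPath_ne_nil (hwf : WellFounded (swap r)) (x : V) : rootPath hwf x ≠ [] :=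
  List.ne_nil_of_mem (List.mem_of_getLast? (getLast?_rootPath hwf x))

theorem rootPath_injective (hwf : WellFounded (swap r)) : Injective (rootPath hwf) := by
  intro x y hxy
  rw [← Option.some_inj, ← getLast?_rootPath hwf x, hxy, getLast?_rootPath]

theorem rootPath_isPrefix_of_reflTransGen (hwf : WellFounded (swap r))
    (hr : Relator.RightUnique r) {x y : V} (h : ReflTransGen r x y) :
    rootPath hwf y <+: rootPath hwf x := by
  induction h using ReflTransGen.head_induction_on with
  | refl => exact List.prefix_rfl
  | head hxz _ ih =>
    rw [rootPath_of_rel hwf hr hxz]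
    exact ih.trans (List.prefix_append _ _)

theorem reflTransGen_of_rootPath_isPrefix (hwf : WellFounded (swap r))
    (hr : Relator.RightUnique r) {x y : V} (h : rootPath hwf y <+: rootPath hwf x) :
    ReflTransGen r x y := by
  induction x using hwf.induction with
  | _ x ih =>
    rcases eq_or_ne y x with rfl | hyx
    · exact .refl
    have hne : rootPath hwf y ≠ rootPath hwf x := (rootPath_injective hwf).ne hyx
    by_cases hx : ∃ z, r x z
    · obtain ⟨z, hxz⟩ := hx
      rw [rootPath_of_rel hwf hr hxz] at h hne
      exact .head hxz (ih z hxz ((List.prefix_concat_iff.1 h).resolve_left hne))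
    · rw [rootPath_of_forall_not hwf (not_exists.1 hx), ← List.nil_append [x]] at h hne
      have hnil := List.prefix_nil.1 ((List.prefix_concat_iff.1 h).resolve_left hne)
      exact absurd hnil (rootPath_ne_nil hwf y)

theorem not_transGen_self (hwf : WellFounded (swap r)) (x : V) : ¬ TransGen r x x := fun h ↦
  have hx : TransGen (swap r) x x := transGen_swap.2 h
  hwf.transGen.asymmetric x x hx hx

theorem transGen_iff_rootPath_isPrefix_and_ne (hwf : WellFounded (swap r))
    (hr : Relator.RightUnique r) (x y : V) :
    TransGen r x y ↔
      rootPath hwf y <+: rootPath hwf x ∧ rootPath hwf y ≠ rootPath hwf x := by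
  constructor
  · intro h
    refine ⟨rootPath_isPrefix_of_reflTransGen hwf hr h.to_reflTransGen, fun heq ↦ ?_⟩
    obtain rfl := rootPath_injective hwf heq
    exact not_transGen_self hwf y h
  · rintro ⟨hpre, hne⟩
    have hxy := reflTransGen_of_rootPath_isPrefix hwf hr hpre
    exact (reflTransGen_iff_eq_or_transGen.1 hxy).resolve_left fun h ↦ hne (h ▸ rfl)

end RootPath

theorem acc_swap_of_reflTransGen {V : Type*} {r : V → V → Prop} (hr : Relator.RightUnique r)
    {x y : V} (hxy : ReflTransGen r x y) (hy : Acc (swap r) y) : Acc (swap r) x := by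
  induction hxy using ReflTransGen.head_induction_on with
  | refl => exact hy
  | head hxz _ ih => exact .intro _ fun w hxw ↦ hr hxz hxw ▸ ih

theorem tree_order_dimension_le_two_general {V : Type*} {r : V → V → Prop}
    (hr : Relator.RightUnique r) (hwf : WellFounded (swap r)) :
    ((∀ x, ¬ TransGen r x x) ∧
     (∀ x y, TransGen r x y → ¬ TransGen r y x) ∧
     (∀ x y z, TransGen r x y → TransGen r y z → TransGen r x z)) ∧
    ∃ lt₁ lt₂ : V → V → Prop,
      IsStrictLinearOrderRel lt₁ ∧ IsStrictLinearOrderRel lt₂ ∧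
      ∀ x y, TransGen r x y ↔ lt₁ x y ∧ lt₂ x y :=
  ⟨⟨not_transGen_self hwf, fun x _ hxy hyx ↦ not_transGen_self hwf x (hxy.trans hyx),
      fun _ _ _ ↦ .trans⟩,
    exists_realizer_of_iff_isPrefix_and_ne (rootPath_injective hwf)
      (transGen_iff_rootPath_isPrefix_and_ne hwf hr)⟩

section RootedTree

variable {V : Type*} {r : V → V → Prop} {ρ : V}

theorem rightUnique_of_root_of_existsUnique (hroot : ∀ y, ¬ r ρ y)
    (hparent : ∀ x, x ≠ ρ → ∃! y, r x y) : Relator.RightUnique r := by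
  intro x y z hxy hxz
  have hx : x ≠ ρ := by rintro rfl; exact hroot y hxy
  exact (hparent x hx).unique hxy hxz

theorem wellFounded_swap_of_root_of_transGen (hr : Relator.RightUnique r)
    (hroot : ∀ y, ¬ r ρ y) (hreach : ∀ x, x ≠ ρ → TransGen r x ρ) : WellFounded (swap r) := by
  have hρ : Acc (swap r) ρ := .intro ρ fun y hy ↦ absurd hy (hroot y)
  refine ⟨fun x ↦ acc_swap_of_reflTransGen hr ?_ hρ⟩
  rcases eq_or_ne x ρ with rfl | hx
  · exact .refl
  · exact (hreach x hx).to_reflTransGen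

end RootedTree

open Relation in
/-- Trees are 2-dimensional: the strict ancestor order of a rooted directed tree on a
finite set is a strict partial order admitting a realizer of size 2. -/
theorem tree_order_dimension_le_two {V : Type*} [Fintype V] (r : V → V → Prop)
    (ρ : V)
    (hroot : ∀ y, ¬ r ρ y)
    (hparent : ∀ x, x ≠ ρ → ∃! y, r x y)
    (hreach : ∀ x, x ≠ ρ → TransGen r x ρ) :
    ((∀ x, ¬ TransGen r x x) ∧
     (∀ x y, TransGen r x y → ¬ TransGen r y x) ∧
     (∀ x y z, TransGen r x y → TransGen r y z → TransGen r x z)) ∧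
    ∃ lt₁ lt₂ : V → V → Prop,
      IsStrictLinearOrderRel lt₁ ∧ IsStrictLinearOrderRel lt₂ ∧
      ∀ x y, TransGen r x y ↔ lt₁ x y ∧ lt₂ x y := by
  have hr := rightUnique_of_root_of_existsUnique hroot hparent
  exact tree_order_dimension_le_two_general hr
    (wellFounded_swap_of_root_of_transGen hr hroot hreach)
end

section
/- (Forests are 2-dimensional) Let V be a finite set and r ⊆ V × V a forest relation: every element has at most one outgoing r-edge, and the transitive closure of r is irreflexive (no cycles). Then the strict ancestor order ≺ (the transitive closure of r), which is a strict partial order, admits a realizer of size 2: there exist strict linear orders <₁ and <₂ on V such that for all x, y ∈ V, x ≺ y iff x <₁ y and x <₂ y. -/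
/-!
A partial order has a realizer of size two as soon as its incomparability relation is oriented by
a transitive relation `q`: the two linear orders are `<` extended by `q` and by the reverse of `q`.

In an order whose principal up-sets are chains, drawn as a forest growing downwards, the relation
of lying to the left is such a `q`. Removing the common upper bounds of two incomparable elements
puts them into two different branches, and an arbitrary linear order on the set of all branches
decides which of the two elements is on the left.
-/

section Conjugate

variable {α : Type*} [PartialOrder α] {q : α → α → Prop} {x y z : α}

/-- A conjugate order of a partial order: a transitive relation under which two elements are
related, in one direction or the other, exactly when they are incomparable. Irreflexivity follows,
since no element is incomparable to itself. -/
structure IsConjugateOrder (q : α → α → Prop) : Prop where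
  trans : ∀ {x y z}, q x y → q y z → q x z
  or_swap_iff_incompRel : ∀ {x y}, q x y ∨ q y x ↔ IncompRel (· ≤ ·) x y

namespace IsConjugateOrder

lemma swap (hq : IsConjugateOrder q) : IsConjugateOrder (Function.swap q) where
  trans hxy hyz := hq.trans hyz hxy
  or_swap_iff_incompRel := or_comm.trans hq.or_swap_iff_incompRel

lemma incompRel (hq : IsConjugateOrder q) (h : q x y) : IncompRel (· ≤ ·) x y :=
  hq.or_swap_iff_incompRel.1 (.inl h)

lemma irrefl (hq : IsConjugateOrder q) (x : α) : ¬ q x x :=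
  fun h => (hq.incompRel h).not_le le_rfl

lemma lt_or_rel_or_eq_or_gt_or_rel (hq : IsConjugateOrder q) (x y : α) :
    (x < y ∨ q x y) ∨ x = y ∨ (y < x ∨ q y x) := by
  have htri := lt_or_eq_or_gt_or_incompRel x y
  rw [← hq.or_swap_iff_incompRel] at htri
  tauto

lemma lt_or_rel_of_lt_of_rel (hq : IsConjugateOrder q) (hxy : x < y) (hyz : q y z) :
    x < z ∨ q x z := by
  rcases hq.lt_or_rel_or_eq_or_gt_or_rel x z with h | rfl | h | h
  · exact h
  · exact absurd hxy.le (hq.incompRel hyz).not_ge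
  · exact absurd (h.trans hxy).le (hq.incompRel hyz).not_ge
  · exact absurd hxy.le (hq.incompRel (hq.trans hyz h)).not_ge

lemma lt_or_rel_of_rel_of_lt (hq : IsConjugateOrder q) (hxy : q x y) (hyz : y < z) :
    x < z ∨ q x z := by
  rcases hq.lt_or_rel_or_eq_or_gt_or_rel x z with h | rfl | h | h
  · exact h
  · exact absurd hyz.le (hq.incompRel hxy).not_ge
  · exact absurd (hyz.trans h).le (hq.incompRel hxy).not_ge
  · exact absurd hyz.le (hq.incompRel (hq.trans h hxy)).not_ge

lemma lt_or_rel_trans (hq : IsConjugateOrder q) :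
    x < y ∨ q x y → y < z ∨ q y z → x < z ∨ q x z := by
  rintro (hxy | hxy) (hyz | hyz)
  · exact .inl (hxy.trans hyz)
  · exact hq.lt_or_rel_of_lt_of_rel hxy hyz
  · exact hq.lt_or_rel_of_rel_of_lt hxy hyz
  · exact .inr (hq.trans hxy hyz)

lemma isStrictLinearOrderRel_lt_or_rel (hq : IsConjugateOrder q) :
    IsStrictLinearOrderRel fun x y => x < y ∨ q x y := by
  have hirrefl (x : α) : ¬ (x < x ∨ q x x) := not_or.2 ⟨lt_irrefl x, hq.irrefl x⟩
  refine ⟨hirrefl, fun x y hxy hyx => hirrefl x (hq.lt_or_rel_trans hxy hyx),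
    fun x y z => hq.lt_or_rel_trans, fun x y hne => ?_⟩
  exact (hq.lt_or_rel_or_eq_or_gt_or_rel x y).imp_right (·.resolve_left hne)

lemma lt_iff_lt_or_rel_and_lt_or_rel_swap (hq : IsConjugateOrder q) :
    x < y ↔ (x < y ∨ q x y) ∧ (x < y ∨ q y x) := by
  have hasymm : ¬ (q x y ∧ q y x) := fun h => hq.irrefl x (hq.trans h.1 h.2)
  tauto

lemma exists_realizer_two (hq : IsConjugateOrder q) :
    ∃ lt₁ lt₂ : α → α → Prop, IsStrictLinearOrderRel lt₁ ∧ IsStrictLinearOrderRel lt₂ ∧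
      ∀ x y, x < y ↔ lt₁ x y ∧ lt₂ x y :=
  ⟨_, _, hq.isStrictLinearOrderRel_lt_or_rel, hq.swap.isStrictLinearOrderRel_lt_or_rel,
    fun _ _ => hq.lt_iff_lt_or_rel_and_lt_or_rel_swap⟩

end IsConjugateOrder

end Conjugate

section Branch

open Set

variable {α : Type*} [Preorder α] {x y z : α}

/-- The branch of `x` away from `y`: everything that has a common upper bound with `x` which is
not above `y`. When principal up-sets are chains and `x`, `y` are incomparable, this is the
component of `x` once the common upper bounds of `x` and `y` are removed. -/
def branch (x y : α) : LowerSet α :=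
  lowerClosure (Ici x \ Ici y)

lemma mem_branch : z ∈ branch x y ↔ ∃ w, x ≤ w ∧ ¬ y ≤ w ∧ z ≤ w := by
  simp [branch, and_assoc]

lemma mem_branch_comm : z ∈ branch x y ↔ x ∈ branch z y := by
  grind [mem_branch]

lemma branch_eq_bot_iff : branch x y = ⊥ ↔ y ≤ x := by
  rw [branch, lowerClosure_eq_bot_iff, sdiff_eq_empty, Ici_subset_Ici]

lemma incompRel_iff_branch_ne_bot :
    IncompRel (· ≤ ·) x y ↔ branch x y ≠ ⊥ ∧ branch y x ≠ ⊥ := by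
  rw [Ne, Ne, branch_eq_bot_iff, branch_eq_bot_iff, IncompRel, and_comm]

lemma branch_ne_branch_swap (h : ¬ y ≤ x) : branch x y ≠ branch y x := by
  have hx : x ∈ branch x y := mem_branch.2 ⟨x, le_rfl, h, le_rfl⟩
  have hx' : x ∉ branch y x := fun hmem => by
    obtain ⟨w, -, hxw, hxw'⟩ := mem_branch.1 hmem
    exact hxw hxw'
  exact fun heq => hx' (heq ▸ hx)

lemma branch_congr_right (hy : y ∉ branch x z) (hz : z ∉ branch x y) :
    branch x y = branch x z := by
  have hiff : ∀ w, x ≤ w → (y ≤ w ↔ z ≤ w) := by grind [mem_branch]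
  have hdiff : Ici x \ Ici y = Ici x \ Ici z := by
    ext w
    exact and_congr_right fun hw => not_congr (hiff w hw)
  rw [branch, branch, hdiff]

lemma branch_le_branch_of_mem (hchain : IsChain (· ≤ ·) (Ici z)) (hz : z ∈ branch x y) :
    branch z y ≤ branch x y := by
  intro v hv
  obtain ⟨w, hxw, hyw, hzw⟩ := mem_branch.1 hz
  obtain ⟨u, hzu, hyu, hvu⟩ := mem_branch.1 hv
  rcases hchain.total hzw hzu with hwu | huw
  · exact mem_branch.2 ⟨u, hxw.trans hwu, hyu, hvu⟩
  · exact mem_branch.2 ⟨w, hxw, hyw, hvu.trans huw⟩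

lemma notMem_branch_of_mem (hchain : IsChain (· ≤ ·) (Ici x)) (hz : z ∈ branch x y) :
    x ∉ branch y z := by
  intro hx
  obtain ⟨w, hxw, hyw, hzw⟩ := mem_branch.1 hz
  obtain ⟨u, hyu, hzu, hxu⟩ := mem_branch.1 hx
  rcases hchain.total hxw hxu with hwu | huw
  · exact hzu (hzw.trans hwu)
  · exact hyw (hyu.trans huw)

lemma branch_eq_of_mem (hchain : ∀ a : α, IsChain (· ≤ ·) (Ici a)) (hz : z ∈ branch x y) :
    branch z y = branch x y :=
  (branch_le_branch_of_mem (hchain z) hz).antisymm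
    (branch_le_branch_of_mem (hchain x) (mem_branch_comm.1 hz))

lemma branch_eq_right_of_mem (hchain : ∀ a : α, IsChain (· ≤ ·) (Ici a))
    (hz : z ∈ branch x y) : branch y z = branch y x :=
  branch_congr_right (notMem_branch_of_mem (hchain z) (mem_branch_comm.1 hz))
    (notMem_branch_of_mem (hchain x) hz)

/-- `x` and `y` are incomparable and `x` lies on the earlier branch. The branches are compared by
an arbitrary fixed well-order, of which only linearity matters. Being incomparable is expressed
through the two branches, so that the relation depends on nothing else. -/
def LeftOf (x y : α) : Prop :=
  branch x y ≠ ⊥ ∧ branch y x ≠ ⊥ ∧ WellOrderingRel (branch x y) (branch y x)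

lemma leftOf_or_swap_iff_incompRel : LeftOf x y ∨ LeftOf y x ↔ IncompRel (· ≤ ·) x y := by
  rw [incompRel_iff_branch_ne_bot]
  refine ⟨fun h => h.elim (fun h => ⟨h.1, h.2.1⟩) fun h => ⟨h.2.1, h.1⟩, fun ⟨hx, hy⟩ => ?_⟩
  have hne : branch x y ≠ branch y x := branch_ne_branch_swap (mt branch_eq_bot_iff.2 hx)
  rcases trichotomous_of WellOrderingRel (branch x y) (branch y x) with h | h | h
  · exact .inl ⟨hx, hy, h⟩
  · exact absurd h hne
  · exact .inr ⟨hy, hx, h⟩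

lemma LeftOf.trans (hchain : ∀ a : α, IsChain (· ≤ ·) (Ici a)) (hxy : LeftOf x y)
    (hyz : LeftOf y z) : LeftOf x z := by
  -- Elements sharing a branch away from a third one compare to it alike. If neither `y, z` nor
  -- `x, y` do so, all three pairs split at the same place into three different branches.
  by_cases hz_yx : z ∈ branch y x
  · rwa [LeftOf, branch_eq_of_mem hchain hz_yx, branch_eq_right_of_mem hchain hz_yx]
  by_cases hx_yz : x ∈ branch y z
  · rwa [LeftOf, branch_eq_of_mem hchain hx_yz, branch_eq_right_of_mem hchain hx_yz]
  have hy : branch y x = branch y z := branch_congr_right hx_yz hz_yx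
  obtain ⟨hx_ne, -, hlt_xy⟩ := hxy
  obtain ⟨-, hz_ne, hlt_yz⟩ := hyz
  have hlt : WellOrderingRel (branch x y) (branch z y) := _root_.trans hlt_xy (hy ▸ hlt_yz)
  have hz_xy : z ∉ branch x y := fun hmem =>
    irrefl (r := WellOrderingRel) (branch x y) (by rwa [branch_eq_of_mem hchain hmem] at hlt)
  have hx : branch x y = branch x z := branch_congr_right (mt mem_branch_comm.1 hx_yz) hz_xy
  have hz : branch z y = branch z x :=
    branch_congr_right (mt mem_branch_comm.1 hz_yx) (mt mem_branch_comm.1 hz_xy)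
  rw [LeftOf, ← hx, ← hz]
  exact ⟨hx_ne, hz_ne, hlt⟩

lemma isConjugateOrder_leftOf {α : Type*} [PartialOrder α]
    (hchain : ∀ a : α, IsChain (· ≤ ·) (Ici a)) : IsConjugateOrder (LeftOf (α := α)) where
  trans := LeftOf.trans hchain
  or_swap_iff_incompRel := leftOf_or_swap_iff_incompRel

end Branch

section Ancestor

open Relation

variable {V : Type*} {r : V → V → Prop}

/-- The ancestor order of an acyclic relation, with `x ≤ y` when there is a possibly empty
`r`-path from `x` to `y`, so that roots are maximal and `<` is the transitive closure of `r`. -/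
abbrev ancestorOrder (hacyclic : ∀ x, ¬ TransGen r x x) : PartialOrder V where
  le := ReflTransGen r
  lt := TransGen r
  le_refl _ := .refl
  le_trans _ _ _ := .trans
  lt_iff_le_not_ge x y := by
    refine ⟨fun h => ⟨h.to_reflTransGen, fun h' => hacyclic x (h.trans_left h')⟩, fun ⟨h, h'⟩ => ?_⟩
    exact (reflTransGen_iff_eq_or_transGen.1 h).resolve_left fun heq => h' (heq ▸ .refl)
  le_antisymm x y hxy hyx :=
    ((reflTransGen_iff_eq_or_transGen.1 hxy).resolve_right
      fun h => hacyclic x (h.trans_left hyx)).symm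

lemma isChain_reflTransGen_of_rightUnique (hr : Relator.RightUnique r) (x : V) :
    IsChain (ReflTransGen r) {y | ReflTransGen r x y} :=
  fun _ hy _ hz _ => ReflTransGen.total_of_right_unique hr hy hz

theorem forest_order_dimension_le_two_general (r : V → V → Prop)
    (hfun : ∀ x y z, r x y → r x z → y = z)
    (hacyclic : ∀ x, ¬ TransGen r x x) :
    ((∀ x, ¬ TransGen r x x) ∧
     (∀ x y, TransGen r x y → ¬ TransGen r y x) ∧
     (∀ x y z, TransGen r x y → TransGen r y z → TransGen r x z)) ∧
    ∃ lt₁ lt₂ : V → V → Prop,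
      IsStrictLinearOrderRel lt₁ ∧ IsStrictLinearOrderRel lt₂ ∧
      ∀ x y, TransGen r x y ↔ lt₁ x y ∧ lt₂ x y := by
  refine ⟨⟨hacyclic, fun x y hxy hyx => hacyclic x (hxy.trans hyx), fun _ _ _ => .trans⟩, ?_⟩
  let := ancestorOrder hacyclic
  have hchain : ∀ x : V, IsChain (· ≤ ·) (Set.Ici x) :=
    isChain_reflTransGen_of_rightUnique hfun
  exact (isConjugateOrder_leftOf hchain).exists_realizer_two

end Ancestor

open Relation in
/-- Forests are 2-dimensional: the strict ancestor order of a forest on a finite set is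
a strict partial order admitting a realizer of size 2. -/
theorem forest_order_dimension_le_two {V : Type*} [Fintype V] (r : V → V → Prop)
    (hfun : ∀ x y z, r x y → r x z → y = z)
    (hacyclic : ∀ x, ¬ TransGen r x x) :
    ((∀ x, ¬ TransGen r x x) ∧
     (∀ x y, TransGen r x y → ¬ TransGen r y x) ∧
     (∀ x y z, TransGen r x y → TransGen r y z → TransGen r x z)) ∧
    ∃ lt₁ lt₂ : V → V → Prop,
      IsStrictLinearOrderRel lt₁ ∧ IsStrictLinearOrderRel lt₂ ∧
      ∀ x y, TransGen r x y ↔ lt₁ x y ∧ lt₂ x y :=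
  forest_order_dimension_le_two_general r hfun hacyclic
end
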